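/- Let b > 0, γ = 1 + 16b/3, and let ω = (ω₀, ω₁) ∈ Ω. If a differentiable v : ℝ → ℂ with v, v' square-integrable satisfies K_ω(v) = 0 and v is not identically zero, then S_ω(φ_ω) ≤ S_ω(v). -/

import Mathlib

/-!
The argument compares both sides with one explicit number, `Hpot (Rmax) / 4`.

Completing the square with the gauge phase `ω₁/2 - |v|²/4` gives
`2 S_ω(v) = ∫ |w|² + |v|² q(|v|²) / 16`, where `w = v' - i (ω₁/2 - |v|²/4) v` and
`q(t) = 4 (4ω₀ - ω₁²) + 4 ω₁ t - γ t²` (`density_identity`, `H1.hasIntegral_sdens`).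
The positive zero of `q` is `Rmax = ˜φ_ω(0)²`, and `q ≥ 0` on `[0, Rmax]`.

If `|u|²` has maximum exactly `Rmax`, then with `r = |u|²` the inequality `x² + y² ≥ 2xy` and
`|r'| ≤ 2 |w| |u|` bound the integrand below by `|r'| √q(r) / 4`. The function `r` rises from `0`
to `Rmax` and falls back to `0`, so with `H(t) = ∫₀ᵗ √q` one gets `S_ω(u) ≥ H(Rmax) / 4`
(`lower_bound`). For the solitary wave `r'² = r² q(r) / 4`, which turns all of these into
equalities: `S_ω(φ_ω) = H(Rmax) / 4` (`Sfun_phi`).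

Finally, if `K_ω(v) = 0` then `l ↦ S_ω(l v)` is maximal at `l = 1` (`Sfun_smul_le`), and since `|v|`
attains a positive maximum, some `l` makes the maximum of `|l v|²` equal to `Rmax`. Hence
`S_ω(v) ≥ S_ω(l v) ≥ H(Rmax) / 4 = S_ω(φ_ω)`.
-/

open MeasureTheory

noncomputable section

/-- γ = 1 + 16b/3 -/
def gam (b : ℝ) : ℝ := 1 + 16 * b / 3

/-- The real-valued profile ˜φ_ω. -/
def phit (b ω₀ ω₁ x : ℝ) : ℝ :=
  Real.sqrt (2 * (4 * ω₀ - ω₁ ^ 2) /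
    (-ω₁ + Real.sqrt (ω₁ ^ 2 + gam b * (4 * ω₀ - ω₁ ^ 2)) *
      Real.cosh (Real.sqrt (4 * ω₀ - ω₁ ^ 2) * x)))

/-- The complex-valued solitary wave profile φ_ω. -/
def phi (b ω₀ ω₁ : ℝ) (x : ℝ) : ℂ :=
  (phit b ω₀ ω₁ x : ℂ) *
    Complex.exp (Complex.I * (ω₁ / 2) * x -
      (Complex.I / 4) * ((∫ η in Set.Iic x, (phit b ω₀ ω₁ η) ^ 2) : ℝ))

/-- Q₀(v) = (1/2)∫|v|². -/
def Q0 (v : ℝ → ℂ) : ℝ := (1 / 2) * ∫ x : ℝ, ‖v x‖ ^ 2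

/-- Q₁(v) = (1/2) Re ∫ i v' conj v. -/
def Q1 (v : ℝ → ℂ) : ℝ :=
  (1 / 2) * (∫ x : ℝ, Complex.I * deriv v x * (starRingEnd ℂ) (v x)).re

/-- P(v) = Re ∫ i |v|² v' conj v. -/
def Pfun (v : ℝ → ℂ) : ℝ :=
  (∫ x : ℝ, Complex.I * (‖v x‖ : ℂ) ^ 2 * deriv v x * (starRingEnd ℂ) (v x)).re

/-- The energy E. -/
def Efun (b : ℝ) (v : ℝ → ℂ) : ℝ :=
  (1 / 2) * (∫ x : ℝ, ‖deriv v x‖ ^ 2) - (1 / 4) * Pfun v -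
    (b / 6) * ∫ x : ℝ, ‖v x‖ ^ 6

/-- L_ω(v). -/
def Lfun (ω₀ ω₁ : ℝ) (v : ℝ → ℂ) : ℝ :=
  (∫ x : ℝ, ‖deriv v x‖ ^ 2) + ω₀ * (∫ x : ℝ, ‖v x‖ ^ 2) +
    ω₁ * (∫ x : ℝ, Complex.I * deriv v x * (starRingEnd ℂ) (v x)).re

/-- The action S_ω. -/
def Sfun (b ω₀ ω₁ : ℝ) (v : ℝ → ℂ) : ℝ :=
  (1 / 2) * Lfun ω₀ ω₁ v - (1 / 4) * Pfun v - (b / 6) * ∫ x : ℝ, ‖v x‖ ^ 6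

/-- The Nehari functional K_ω. -/
def Kfun (b ω₀ ω₁ : ℝ) (v : ℝ → ℂ) : ℝ :=
  Lfun ω₀ ω₁ v - Pfun v - b * ∫ x : ℝ, ‖v x‖ ^ 6

/-- v ∈ H¹(ℝ): v differentiable with v and v' square-integrable. -/
def H1 (v : ℝ → ℂ) : Prop :=
  Differentiable ℝ v ∧ Integrable (fun x : ℝ => ‖v x‖ ^ 2) ∧
    Integrable (fun x : ℝ => ‖deriv v x‖ ^ 2)

/-- The function g from Remark 1. -/
def gfun (b ξ : ℝ) : ℝ :=
  (2 * (gam b - 1) / ξ) * Real.arctan ((1 + Real.sqrt (1 + ξ ^ 2)) / ξ)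


/-! ### The potential of the gauge-transformed action -/

/-- The quadratic `q` for which `ρ² q(ρ²) / 16` is the potential term, in the modulus `ρ = |v|`, of
twice the gauge-transformed action. -/
def qpot (b ω₀ ω₁ t : ℝ) : ℝ := 4 * (4 * ω₀ - ω₁ ^ 2) + 4 * ω₁ * t - gam b * t ^ 2

/-- The primitive of `√q` vanishing at `0`. Since `Real.sqrt` is `0` on negative numbers, the
integrand is continuous on all of `ℝ`. -/
def Hpot (b ω₀ ω₁ t : ℝ) : ℝ := ∫ s in (0 : ℝ)..t, Real.sqrt (qpot b ω₀ ω₁ s)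

lemma continuous_sqrt_qpot (b ω₀ ω₁ : ℝ) :
    Continuous fun s => Real.sqrt (qpot b ω₀ ω₁ s) := by
  unfold qpot; fun_prop

lemma hasDerivAt_Hpot (b ω₀ ω₁ t : ℝ) :
    HasDerivAt (Hpot b ω₀ ω₁) (Real.sqrt (qpot b ω₀ ω₁ t)) t :=
  (continuous_sqrt_qpot b ω₀ ω₁).integral_hasStrictDerivAt 0 t |>.hasDerivAt

lemma Hpot_zero (b ω₀ ω₁ : ℝ) : Hpot b ω₀ ω₁ 0 = 0 := by simp [Hpot]

/-! ### Pointwise identities -/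

/-- Completing the square in the action density at a point where `v = z` and `v' = p`. -/
lemma density_identity (b ω₀ ω₁ : ℝ) (z p : ℂ) :
    (1 / 2) * (‖p‖ ^ 2 + ω₀ * ‖z‖ ^ 2 + ω₁ * (Complex.I * p * (starRingEnd ℂ) z).re)
      - (1 / 4) * (Complex.I * (‖z‖ : ℂ) ^ 2 * p * (starRingEnd ℂ) z).re - (b / 6) * ‖z‖ ^ 6 =
    (1 / 2) * (‖p - Complex.I * ((ω₁ / 2 - ‖z‖ ^ 2 / 4 : ℝ) : ℂ) * z‖ ^ 2
      + ‖z‖ ^ 2 * qpot b ω₀ ω₁ (‖z‖ ^ 2) / 16) := by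
  have h6 : ‖z‖ ^ 6 = (‖z‖ ^ 2) ^ 3 := by ring
  have hc : (‖z‖ : ℂ) ^ 2 = ((‖z‖ ^ 2 : ℝ) : ℂ) := by push_cast; rfl
  rw [h6, hc]
  simp only [← Complex.normSq_eq_norm_sq, Complex.normSq_apply, qpot, gam, Complex.sub_re,
    Complex.sub_im, Complex.mul_re, Complex.mul_im, Complex.I_re, Complex.I_im, Complex.conj_re,
    Complex.conj_im, Complex.ofReal_re, Complex.ofReal_im]
  ring

/-- Cauchy–Schwarz and `x² + y² ≥ 2xy` for the density; `2 Re(p conj z)` is the derivative of `|v|²`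
when `v = z` and `v' = p`. The gauge phase `a` is arbitrary. -/
lemma density_lower {b ω₀ ω₁ : ℝ} (a : ℝ) (z p : ℂ) (hq : 0 ≤ qpot b ω₀ ω₁ (‖z‖ ^ 2)) :
    (1 / 4) * |Real.sqrt (qpot b ω₀ ω₁ (‖z‖ ^ 2)) * (2 * (p * (starRingEnd ℂ) z).re)| ≤
    ‖p - Complex.I * (a : ℂ) * z‖ ^ 2 + ‖z‖ ^ 2 * qpot b ω₀ ω₁ (‖z‖ ^ 2) / 16 := by
  set Q := qpot b ω₀ ω₁ (‖z‖ ^ 2)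
  set w := p - Complex.I * (a : ℂ) * z with hw
  -- the gauge term contributes nothing to the radial derivative
  have h1 : (p * (starRingEnd ℂ) z).re = (w * (starRingEnd ℂ) z).re := by
    simp only [hw, Complex.sub_re, Complex.sub_im, Complex.mul_re, Complex.mul_im, Complex.I_re,
      Complex.I_im, Complex.conj_re, Complex.conj_im, Complex.ofReal_re, Complex.ofReal_im]
    ring
  have h2 : |(w * (starRingEnd ℂ) z).re| ≤ ‖w‖ * ‖z‖ := by
    simpa using Complex.abs_re_le_norm (w * (starRingEnd ℂ) z)
  have hs := Real.sq_sqrt hq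
  have hs0 := Real.sqrt_nonneg Q
  rw [h1, abs_mul, abs_mul, abs_of_nonneg hs0, abs_two]
  have h3 := mul_le_mul_of_nonneg_left h2 hs0
  nlinarith [sq_nonneg (‖w‖ - ‖z‖ * Real.sqrt Q / 4)]

lemma hasDerivAt_norm_sq {v : ℝ → ℂ} {p : ℂ} {x : ℝ} (h : HasDerivAt v p x) :
    HasDerivAt (fun y => ‖v y‖ ^ 2) (2 * (p * (starRingEnd ℂ) (v x)).re) x := by
  have := h.norm_sq
  convert this using 2
  simp [Complex.inner]

/-! ### Consequences of membership in `H¹` -/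

lemma H1.continuous {v : ℝ → ℂ} (hv : H1 v) : Continuous v := hv.1.continuous

lemma H1.integrable_cross {v : ℝ → ℂ} (hv : H1 v) :
    Integrable fun x => deriv v x * (starRingEnd ℂ) (v x) := by
  refine (hv.2.1.add hv.2.2).mono' ?_ (.of_forall fun x => ?_)
  · exact (aestronglyMeasurable_deriv v _).mul
      (Complex.continuous_conj.comp hv.continuous).aestronglyMeasurable
  · simp only [norm_mul, RCLike.norm_conj, Pi.add_apply]
    nlinarith [sq_nonneg (‖deriv v x‖ - ‖v x‖), sq_nonneg (‖deriv v x‖), sq_nonneg (‖v x‖)]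

lemma H1.integrable_deriv_sq {v : ℝ → ℂ} (hv : H1 v) :
    Integrable fun x => 2 * (deriv v x * (starRingEnd ℂ) (v x)).re :=
  hv.integrable_cross.re.const_mul 2

lemma H1.hasDerivAt_sq {v : ℝ → ℂ} (hv : H1 v) (x : ℝ) :
    HasDerivAt (fun y => ‖v y‖ ^ 2) (2 * (deriv v x * (starRingEnd ℂ) (v x)).re) x :=
  hasDerivAt_norm_sq (hv.1 x).hasDerivAt

lemma tendsto_zero_ends {r r' : ℝ → ℝ} (h : ∀ x, HasDerivAt r (r' x) x)
    (hi : Integrable r) (hi' : Integrable r') :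
    Filter.Tendsto r Filter.atTop (nhds 0) ∧ Filter.Tendsto r Filter.atBot (nhds 0) :=
  ⟨tendsto_zero_of_hasDerivAt_of_integrableOn_Ioi (a := 0) (fun x _ => h x)
      hi'.integrableOn hi.integrableOn,
    tendsto_zero_of_hasDerivAt_of_integrableOn_Iic (a := 0) (fun x _ => h x)
      hi'.integrableOn hi.integrableOn⟩

lemma exists_max {r r' : ℝ → ℝ} (h : ∀ x, HasDerivAt r (r' x) x)
    (hi : Integrable r) (hi' : Integrable r') {x₁ : ℝ} (hx : 0 < r x₁) :
    ∃ x₀, ∀ x, r x ≤ r x₀ := by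
  have hc : Continuous r := continuous_iff_continuousAt.2 fun x => (h x).continuousAt
  obtain ⟨ht, hb⟩ := tendsto_zero_ends h hi hi'
  refine hc.exists_forall_ge' x₁ ?_
  rw [cocompact_eq_atBot_atTop, Filter.eventually_sup]
  exact ⟨(hb.eventually (gt_mem_nhds hx)).mono fun _ => le_of_lt,
    (ht.eventually (gt_mem_nhds hx)).mono fun _ => le_of_lt⟩

lemma H1.exists_bound {v : ℝ → ℂ} (hv : H1 v) : ∃ M, ∀ x, ‖v x‖ ^ 2 ≤ M := by
  by_cases h : ∃ x₁, 0 < ‖v x₁‖ ^ 2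
  · obtain ⟨x₁, hx⟩ := h
    obtain ⟨x₀, h0⟩ := exists_max hv.hasDerivAt_sq hv.2.1 hv.integrable_deriv_sq hx
    exact ⟨_, h0⟩
  · push Not at h
    exact ⟨0, h⟩

lemma H1.integrable_P {v : ℝ → ℂ} (hv : H1 v) :
    Integrable fun x : ℝ => Complex.I * (‖v x‖ : ℂ) ^ 2 * deriv v x * (starRingEnd ℂ) (v x) := by
  obtain ⟨M, hM⟩ := hv.exists_bound
  have hc := hv.continuous
  have : Integrable fun x : ℝ =>
      (Complex.I * (‖v x‖ : ℂ) ^ 2) * (deriv v x * (starRingEnd ℂ) (v x)) := by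
    refine hv.integrable_cross.bdd_mul (c := M) ?_ (.of_forall fun x => ?_)
    · exact Continuous.aestronglyMeasurable (by fun_prop)
    · simpa using hM x
  simpa only [mul_assoc] using this

lemma H1.integrable_six {v : ℝ → ℂ} (hv : H1 v) : Integrable fun x : ℝ => ‖v x‖ ^ 6 := by
  obtain ⟨M, hM⟩ := hv.exists_bound
  have hc := hv.continuous
  have : Integrable fun x : ℝ => ‖v x‖ ^ 4 * ‖v x‖ ^ 2 := by
    refine hv.2.1.bdd_mul (c := M ^ 2) ?_ (.of_forall fun x => ?_)
    · exact Continuous.aestronglyMeasurable (by fun_prop)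
    · have h4 : ‖v x‖ ^ 4 = (‖v x‖ ^ 2) ^ 2 := by ring
      rw [h4, Real.norm_of_nonneg (by positivity)]
      exact pow_le_pow_left₀ (by positivity) (hM x) 2
  simpa only [← pow_add] using this

lemma H1.integrable_I {v : ℝ → ℂ} (hv : H1 v) :
    Integrable fun x : ℝ => Complex.I * deriv v x * (starRingEnd ℂ) (v x) := by
  simpa only [mul_assoc] using hv.integrable_cross.const_mul Complex.I

/-- Density of the gauge-transformed action at a point where `v = z` and `v' = p`. -/
def sdens (b ω₀ ω₁ : ℝ) (z p : ℂ) : ℝ :=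
  (1 / 2) * (‖p - Complex.I * ((ω₁ / 2 - ‖z‖ ^ 2 / 4 : ℝ) : ℂ) * z‖ ^ 2
      + ‖z‖ ^ 2 * qpot b ω₀ ω₁ (‖z‖ ^ 2) / 16)

lemma H1.hasIntegral_sdens {v : ℝ → ℂ} (hv : H1 v) (b ω₀ ω₁ : ℝ) :
    Integrable (fun x => sdens b ω₀ ω₁ (v x) (deriv v x)) ∧
    Sfun b ω₀ ω₁ v = ∫ x, sdens b ω₀ ω₁ (v x) (deriv v x) := by
  have e : (fun x => sdens b ω₀ ω₁ (v x) (deriv v x)) = fun x =>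
      (1 / 2) * (‖deriv v x‖ ^ 2 + ω₀ * ‖v x‖ ^ 2
        + ω₁ * (Complex.I * deriv v x * (starRingEnd ℂ) (v x)).re)
      - (1 / 4) * (Complex.I * (‖v x‖ : ℂ) ^ 2 * deriv v x * (starRingEnd ℂ) (v x)).re
      - (b / 6) * ‖v x‖ ^ 6 := by
    funext x; rw [density_identity]; rfl
  have i1 := hv.2.2
  have i2 := hv.2.1.const_mul ω₀
  have i3 : Integrable fun x => ω₁ * (Complex.I * deriv v x * (starRingEnd ℂ) (v x)).re :=
    hv.integrable_I.re.const_mul ω₁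
  have i4 : Integrable fun x => (1 / 4 : ℝ) *
      (Complex.I * (‖v x‖ : ℂ) ^ 2 * deriv v x * (starRingEnd ℂ) (v x)).re :=
    hv.integrable_P.re.const_mul (1 / 4)
  have i5 := hv.integrable_six.const_mul (b / 6)
  have r3 : ∫ x, (Complex.I * deriv v x * (starRingEnd ℂ) (v x)).re =
      (∫ x, Complex.I * deriv v x * (starRingEnd ℂ) (v x)).re := integral_re hv.integrable_I
  have r4 : ∫ x, (Complex.I * (‖v x‖ : ℂ) ^ 2 * deriv v x * (starRingEnd ℂ) (v x)).re =
      (∫ x, Complex.I * (‖v x‖ : ℂ) ^ 2 * deriv v x * (starRingEnd ℂ) (v x)).re :=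
    integral_re hv.integrable_P
  have i12 : Integrable fun x => ‖deriv v x‖ ^ 2 + ω₀ * ‖v x‖ ^ 2 := i1.add i2
  have i123 : Integrable fun x => (1 / 2 : ℝ) * (‖deriv v x‖ ^ 2 + ω₀ * ‖v x‖ ^ 2
        + ω₁ * (Complex.I * deriv v x * (starRingEnd ℂ) (v x)).re) :=
    (i12.add i3).const_mul (1 / 2)
  rw [e]
  have i1234 : Integrable fun x => (1 / 2 : ℝ) * (‖deriv v x‖ ^ 2 + ω₀ * ‖v x‖ ^ 2
        + ω₁ * (Complex.I * deriv v x * (starRingEnd ℂ) (v x)).re) - (1 / 4 : ℝ) *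
      (Complex.I * (‖v x‖ : ℂ) ^ 2 * deriv v x * (starRingEnd ℂ) (v x)).re := i123.sub i4
  refine ⟨i1234.sub i5, ?_⟩
  rw [integral_sub i1234 i5, integral_sub i123 i4, integral_const_mul,
    integral_add i12 i3, integral_add i1 i2]
  simp only [integral_const_mul]
  rw [r3, r4]
  rfl

lemma H1.Lfun_nonneg {v : ℝ → ℂ} (hv : H1 v) {ω₀ ω₁ : ℝ} (hΩ : ω₁ ^ 2 < 4 * ω₀) :
    0 ≤ Lfun ω₀ ω₁ v := by
  have i1 := hv.2.2
  have i2 := hv.2.1.const_mul ω₀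
  have i3 : Integrable fun x => ω₁ * (Complex.I * deriv v x * (starRingEnd ℂ) (v x)).re :=
    hv.integrable_I.re.const_mul ω₁
  have r3 : ∫ x, (Complex.I * deriv v x * (starRingEnd ℂ) (v x)).re =
      (∫ x, Complex.I * deriv v x * (starRingEnd ℂ) (v x)).re := integral_re hv.integrable_I
  have i12 : Integrable fun x => ‖deriv v x‖ ^ 2 + ω₀ * ‖v x‖ ^ 2 := i1.add i2
  unfold Lfun
  rw [← r3, ← integral_const_mul, ← integral_const_mul, ← integral_add i1 i2,
    ← integral_add i12 i3]
  refine integral_nonneg fun x => ?_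
  have h2 : |(Complex.I * deriv v x * (starRingEnd ℂ) (v x)).re| ≤ ‖deriv v x‖ * ‖v x‖ := by
    simpa using Complex.abs_re_le_norm (Complex.I * deriv v x * (starRingEnd ℂ) (v x))
  have h3 : |ω₁ * (Complex.I * deriv v x * (starRingEnd ℂ) (v x)).re| ≤
      |ω₁| * (‖deriv v x‖ * ‖v x‖) := by
    rw [abs_mul]; exact mul_le_mul_of_nonneg_left h2 (abs_nonneg _)
  have h4 := neg_abs_le (ω₁ * (Complex.I * deriv v x * (starRingEnd ℂ) (v x)).re)
  simp only [Pi.zero_apply]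
  nlinarith [sq_nonneg (‖deriv v x‖ - |ω₁| / 2 * ‖v x‖), sq_abs ω₁, sq_nonneg ‖v x‖]

/-! ### Scaling -/

lemma H1.smul {v : ℝ → ℂ} (hv : H1 v) (l : ℝ) : H1 fun x => (l : ℂ) * v x := by
  have hd : deriv (fun x => (l : ℂ) * v x) = fun x => (l : ℂ) * deriv v x := by
    funext x; exact deriv_const_mul _ (hv.1 x)
  refine ⟨hv.1.const_mul _, ?_, ?_⟩
  · simpa [mul_pow] using hv.2.1.const_mul (l ^ 2)
  · rw [hd]; simpa [mul_pow] using hv.2.2.const_mul (l ^ 2)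

lemma Sfun_smul {v : ℝ → ℂ} (hv : H1 v) (b ω₀ ω₁ l : ℝ) :
    Sfun b ω₀ ω₁ (fun x => (l : ℂ) * v x) =
      l ^ 2 / 2 * Lfun ω₀ ω₁ v - l ^ 4 / 4 * Pfun v - l ^ 6 * b / 6 * ∫ x, ‖v x‖ ^ 6 := by
  have hd : deriv (fun x => (l : ℂ) * v x) = fun x => (l : ℂ) * deriv v x := by
    funext x; exact deriv_const_mul _ (hv.1 x)
  have e1 : ∫ x, ‖(l : ℂ) * deriv v x‖ ^ 2 = l ^ 2 * ∫ x, ‖deriv v x‖ ^ 2 := by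
    rw [← integral_const_mul]; simp [mul_pow]
  have e2 : ∫ x, ‖(l : ℂ) * v x‖ ^ 2 = l ^ 2 * ∫ x, ‖v x‖ ^ 2 := by
    rw [← integral_const_mul]; simp [mul_pow]
  have e6 : ∫ x, ‖(l : ℂ) * v x‖ ^ 6 = l ^ 6 * ∫ x, ‖v x‖ ^ 6 := by
    rw [← integral_const_mul]
    have : |l| ^ 6 = l ^ 6 := Even.pow_abs (by decide) l
    simp [mul_pow, this]
  have e3 : ∫ x, Complex.I * ((l : ℂ) * deriv v x) * (starRingEnd ℂ) ((l : ℂ) * v x) =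
      ((l ^ 2 : ℝ) : ℂ) * ∫ x, Complex.I * deriv v x * (starRingEnd ℂ) (v x) := by
    rw [← integral_const_mul]
    congr 1; funext x
    simp only [map_mul, Complex.conj_ofReal]; push_cast; ring
  have e4 : ∫ x, Complex.I * (‖(l : ℂ) * v x‖ : ℂ) ^ 2 * ((l : ℂ) * deriv v x)
        * (starRingEnd ℂ) ((l : ℂ) * v x) =
      ((l ^ 4 : ℝ) : ℂ) * ∫ x, Complex.I * (‖v x‖ : ℂ) ^ 2 * deriv v x
        * (starRingEnd ℂ) (v x) := by
    rw [← integral_const_mul]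
    congr 1; funext x
    have : (‖(l : ℂ) * v x‖ : ℂ) ^ 2 = (l : ℂ) ^ 2 * (‖v x‖ : ℂ) ^ 2 := by
      rw [← Complex.ofReal_pow, norm_mul, mul_pow, Complex.norm_real, Real.norm_eq_abs, sq_abs]
      push_cast; rfl
    rw [this]
    simp only [map_mul, Complex.conj_ofReal]; push_cast; ring
  unfold Sfun Lfun Pfun
  rw [hd, e1, e2, e3, e4, e6, Complex.re_ofReal_mul, Complex.re_ofReal_mul]
  ring

/-- On the Nehari manifold the action is maximal along the ray through `v`. -/
lemma Sfun_smul_le {v : ℝ → ℂ} (hv : H1 v) {b ω₀ ω₁ : ℝ} (hb : 0 < b) (hΩ : ω₁ ^ 2 < 4 * ω₀)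
    (hK : Kfun b ω₀ ω₁ v = 0) (l : ℝ) :
    Sfun b ω₀ ω₁ (fun x => (l : ℂ) * v x) ≤ Sfun b ω₀ ω₁ v := by
  rw [Sfun_smul hv]
  have hL := hv.Lfun_nonneg hΩ
  have hN : 0 ≤ ∫ x, ‖v x‖ ^ 6 := integral_nonneg fun x => by positivity
  unfold Kfun at hK
  unfold Sfun
  set N := ∫ x, ‖v x‖ ^ 6
  have hP : Pfun v = Lfun ω₀ ω₁ v - b * N := by linarith
  rw [hP, ← sub_nonneg]
  -- `S(v) - S(l v)` after eliminating `P(v)` through `K(v) = 0`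
  have : 0 ≤ Lfun ω₀ ω₁ v * (1 - l ^ 2) ^ 2 / 4
      + b * N / 12 * ((1 - l ^ 2) ^ 2 * (1 + 2 * l ^ 2)) := by positivity
  nlinarith [this]

/-! ### Integrals of `√q(r) r'` over half-lines -/

/-- The fundamental theorem of calculus for `H ∘ r`, where `H` is `Hpot` and `r` vanishes at both
ends. -/
lemma half_line_integrals {b ω₀ ω₁ : ℝ} {r r' : ℝ → ℝ} (h : ∀ x, HasDerivAt r (r' x) x)
    (hi : Integrable r) (hi' : Integrable r') {M : ℝ} (h0 : ∀ x, 0 ≤ r x) (hM : ∀ x, r x ≤ M)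
    (x₀ : ℝ) :
    Integrable (fun x => Real.sqrt (qpot b ω₀ ω₁ (r x)) * r' x) ∧
    ∫ x in Set.Ioi x₀, Real.sqrt (qpot b ω₀ ω₁ (r x)) * r' x = - Hpot b ω₀ ω₁ (r x₀) ∧
    ∫ x in Set.Iic x₀, Real.sqrt (qpot b ω₀ ω₁ (r x)) * r' x = Hpot b ω₀ ω₁ (r x₀) := by
  have hc : Continuous r := continuous_iff_continuousAt.2 fun x => (h x).continuousAt
  obtain ⟨ht, hb⟩ := tendsto_zero_ends h hi hi'
  have hd : ∀ x, HasDerivAt (fun y => Hpot b ω₀ ω₁ (r y))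
      (Real.sqrt (qpot b ω₀ ω₁ (r x)) * r' x) x := fun x =>
    (hasDerivAt_Hpot b ω₀ ω₁ (r x)).comp x (h x)
  obtain ⟨C, hC⟩ := (isCompact_Icc (a := (0 : ℝ)) (b := M)).exists_bound_of_continuousOn
    (continuous_sqrt_qpot b ω₀ ω₁).continuousOn
  have hint : Integrable (fun x => Real.sqrt (qpot b ω₀ ω₁ (r x)) * r' x) :=
    hi'.bdd_mul (c := C) ((continuous_sqrt_qpot b ω₀ ω₁).comp hc).aestronglyMeasurable
      (.of_forall fun x => hC _ ⟨h0 x, hM x⟩)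
  have hH : Filter.Tendsto (Hpot b ω₀ ω₁) (nhds 0) (nhds 0) := by
    have := (hasDerivAt_Hpot b ω₀ ω₁ 0).continuousAt.tendsto
    rwa [Hpot_zero] at this
  refine ⟨hint, ?_, ?_⟩
  · rw [integral_Ioi_of_hasDerivAt_of_tendsto' (fun x _ => hd x) hint.integrableOn (hH.comp ht)]
    simp
  · rw [integral_Iic_of_hasDerivAt_of_tendsto' (fun x _ => hd x) hint.integrableOn (hH.comp hb)]
    simp

/-! ### The lower bound on the action -/

/-- The peak of `|φ_ω|²`, attained at the origin; it is the positive zero of `qpot`. -/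
def Rmax (b ω₀ ω₁ : ℝ) : ℝ :=
  2 * (4 * ω₀ - ω₁ ^ 2) / (-ω₁ + Real.sqrt (ω₁ ^ 2 + gam b * (4 * ω₀ - ω₁ ^ 2)))

lemma abs_lt_D {b ω₀ ω₁ : ℝ} (hb : 0 < b) (hΩ : ω₁ ^ 2 < 4 * ω₀) :
    |ω₁| < Real.sqrt (ω₁ ^ 2 + gam b * (4 * ω₀ - ω₁ ^ 2)) := by
  rw [← Real.sqrt_sq_eq_abs]
  refine Real.sqrt_lt_sqrt (sq_nonneg _) ?_
  have : 0 < gam b := by unfold gam; positivity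
  nlinarith [mul_pos this (sub_pos.2 hΩ)]

lemma Rmax_pos {b ω₀ ω₁ : ℝ} (hb : 0 < b) (hΩ : ω₁ ^ 2 < 4 * ω₀) : 0 < Rmax b ω₀ ω₁ := by
  have := abs_lt_D hb hΩ
  have := le_abs_self ω₁
  exact div_pos (by linarith) (by linarith)

lemma qpot_nonneg {b ω₀ ω₁ : ℝ} (hb : 0 < b) (hΩ : ω₁ ^ 2 < 4 * ω₀) {t : ℝ} (h0 : 0 ≤ t)
    (ht : t ≤ Rmax b ω₀ ω₁) : 0 ≤ qpot b ω₀ ω₁ t := by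
  have hR := Rmax_pos hb hΩ
  have hg : 0 < gam b := by unfold gam; positivity
  have hD := abs_lt_D hb hΩ
  have hle := le_abs_self ω₁
  have hc : 0 < 4 * ω₀ - ω₁ ^ 2 := by linarith
  have hsq := Real.sq_sqrt (show 0 ≤ ω₁ ^ 2 + gam b * (4 * ω₀ - ω₁ ^ 2) by positivity)
  have hzero : qpot b ω₀ ω₁ (Rmax b ω₀ ω₁) = 0 := by
    unfold qpot Rmax
    set D := Real.sqrt (ω₁ ^ 2 + gam b * (4 * ω₀ - ω₁ ^ 2))
    set c := 4 * ω₀ - ω₁ ^ 2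
    have : -ω₁ + D ≠ 0 := by linarith
    field_simp
    linear_combination 4 * c * hsq
  -- factorization of `q` through its zero `Rmax`; the second factor is positive
  have key : Rmax b ω₀ ω₁ * qpot b ω₀ ω₁ t =
      (Rmax b ω₀ ω₁ - t) * (gam b * Rmax b ω₀ ω₁ * t + 4 * (4 * ω₀ - ω₁ ^ 2)) := by
    unfold qpot at hzero ⊢
    linear_combination t * hzero
  have : 0 ≤ Rmax b ω₀ ω₁ * qpot b ω₀ ω₁ t := by
    rw [key]
    exact mul_nonneg (by linarith) (by positivity)
  exact nonneg_of_mul_nonneg_right this hR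

/-- Modica–Mortola type bound: the path of `|u|²` from `0` up to `Rmax` and back costs at least
`H(Rmax) / 4`, where `H` is `Hpot`. -/
lemma lower_bound {b ω₀ ω₁ : ℝ} (hb : 0 < b) (hΩ : ω₁ ^ 2 < 4 * ω₀) {u : ℝ → ℂ} (hu : H1 u)
    {x₀ : ℝ} (hx₀ : ‖u x₀‖ ^ 2 = Rmax b ω₀ ω₁) (hle : ∀ x, ‖u x‖ ^ 2 ≤ Rmax b ω₀ ω₁) :
    Hpot b ω₀ ω₁ (Rmax b ω₀ ω₁) / 4 ≤ Sfun b ω₀ ω₁ u := by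
  obtain ⟨hint, hS⟩ := hu.hasIntegral_sdens b ω₀ ω₁
  obtain ⟨hi, hp, hm⟩ := half_line_integrals (b := b) (ω₀ := ω₀) (ω₁ := ω₁)
    hu.hasDerivAt_sq hu.2.1 hu.integrable_deriv_sq (fun x => by positivity) hle x₀
  rw [hx₀] at hp hm
  have hpt : ∀ x, (1 / 8) * |Real.sqrt (qpot b ω₀ ω₁ (‖u x‖ ^ 2))
      * (2 * (deriv u x * (starRingEnd ℂ) (u x)).re)| ≤ sdens b ω₀ ω₁ (u x) (deriv u x) := by
    intro x
    have := density_lower (ω₁ / 2 - ‖u x‖ ^ 2 / 4) (u x) (deriv u x)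
      (qpot_nonneg hb hΩ (by positivity) (hle x))
    unfold sdens
    linarith
  rw [hS, ← intervalIntegral.integral_Iic_add_Ioi (b := x₀) hint.integrableOn hint.integrableOn]
  have h1 : ∫ x in Set.Iic x₀, (1 / 8) * (Real.sqrt (qpot b ω₀ ω₁ (‖u x‖ ^ 2))
      * (2 * (deriv u x * (starRingEnd ℂ) (u x)).re)) ≤
      ∫ x in Set.Iic x₀, sdens b ω₀ ω₁ (u x) (deriv u x) := by
    refine integral_mono (hi.integrableOn.const_mul _) hint.integrableOn fun x => ?_
    exact le_trans (mul_le_mul_of_nonneg_left (le_abs_self _) (by norm_num)) (hpt x)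
  have h2 : ∫ x in Set.Ioi x₀, (-1 / 8) * (Real.sqrt (qpot b ω₀ ω₁ (‖u x‖ ^ 2))
      * (2 * (deriv u x * (starRingEnd ℂ) (u x)).re)) ≤
      ∫ x in Set.Ioi x₀, sdens b ω₀ ω₁ (u x) (deriv u x) := by
    refine integral_mono (hi.integrableOn.const_mul _) hint.integrableOn fun x => ?_
    refine le_trans ?_ (hpt x)
    have := neg_abs_le (Real.sqrt (qpot b ω₀ ω₁ (‖u x‖ ^ 2))
      * (2 * (deriv u x * (starRingEnd ℂ) (u x)).re))
    simp only
    linarith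
  rw [integral_const_mul, hm] at h1
  rw [integral_const_mul, hp] at h2
  linarith

/-! ### The solitary wave -/

/-- The squared modulus of the solitary wave. -/
def rsq (b ω₀ ω₁ x : ℝ) : ℝ :=
  2 * (4 * ω₀ - ω₁ ^ 2) /
    (-ω₁ + Real.sqrt (ω₁ ^ 2 + gam b * (4 * ω₀ - ω₁ ^ 2)) *
      Real.cosh (Real.sqrt (4 * ω₀ - ω₁ ^ 2) * x))

/-- The logarithmic derivative of `rsq`. -/
def ksq (b ω₀ ω₁ x : ℝ) : ℝ :=
  -(Real.sqrt (ω₁ ^ 2 + gam b * (4 * ω₀ - ω₁ ^ 2)) * Real.sqrt (4 * ω₀ - ω₁ ^ 2) *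
      Real.sinh (Real.sqrt (4 * ω₀ - ω₁ ^ 2) * x)) /
    (-ω₁ + Real.sqrt (ω₁ ^ 2 + gam b * (4 * ω₀ - ω₁ ^ 2)) *
      Real.cosh (Real.sqrt (4 * ω₀ - ω₁ ^ 2) * x))

/-- The real phase of the solitary wave. -/
def theta (b ω₀ ω₁ x : ℝ) : ℝ :=
  ω₁ / 2 * x - (1 / 4) * ∫ η in Set.Iic x, rsq b ω₀ ω₁ η

lemma one_add_sq_le_two_cosh (y : ℝ) : 1 + y ^ 2 ≤ 2 * Real.cosh y := by
  have h1 : Real.cosh y = 1 + 2 * Real.sinh (y / 2) ^ 2 := by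
    have := Real.cosh_two_mul (y / 2)
    rw [mul_div_cancel₀ y two_ne_zero, Real.cosh_sq] at this
    linarith
  have h2 : (y / 2) ^ 2 ≤ Real.sinh (y / 2) ^ 2 := by
    rw [sq_le_sq, Real.abs_sinh]
    exact Real.self_le_sinh_iff.2 (abs_nonneg _)
  nlinarith

lemma den_lower (b ω₀ ω₁ x : ℝ) :
    (Real.sqrt (ω₁ ^ 2 + gam b * (4 * ω₀ - ω₁ ^ 2)) - |ω₁|) *
        Real.cosh (Real.sqrt (4 * ω₀ - ω₁ ^ 2) * x) ≤
      -ω₁ + Real.sqrt (ω₁ ^ 2 + gam b * (4 * ω₀ - ω₁ ^ 2)) *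
        Real.cosh (Real.sqrt (4 * ω₀ - ω₁ ^ 2) * x) := by
  have := Real.one_le_cosh (Real.sqrt (4 * ω₀ - ω₁ ^ 2) * x)
  nlinarith [le_abs_self ω₁, abs_nonneg ω₁]

lemma den_pos {b ω₀ ω₁ : ℝ} (hb : 0 < b) (hΩ : ω₁ ^ 2 < 4 * ω₀) (x : ℝ) :
    0 < -ω₁ + Real.sqrt (ω₁ ^ 2 + gam b * (4 * ω₀ - ω₁ ^ 2)) *
        Real.cosh (Real.sqrt (4 * ω₀ - ω₁ ^ 2) * x) :=
  lt_of_lt_of_le (mul_pos (sub_pos.2 (abs_lt_D hb hΩ)) (Real.cosh_pos _)) (den_lower b ω₀ ω₁ x)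

lemma rsq_pos {b ω₀ ω₁ : ℝ} (hb : 0 < b) (hΩ : ω₁ ^ 2 < 4 * ω₀) (x : ℝ) : 0 < rsq b ω₀ ω₁ x :=
  div_pos (by linarith) (den_pos hb hΩ x)

lemma rsq_le {b ω₀ ω₁ : ℝ} (hb : 0 < b) (hΩ : ω₁ ^ 2 < 4 * ω₀) (x : ℝ) :
    rsq b ω₀ ω₁ x ≤ Rmax b ω₀ ω₁ := by
  have h1 := abs_lt_D hb hΩ
  have h2 := le_abs_self ω₁
  unfold rsq Rmax
  refine div_le_div_of_nonneg_left (by linarith) (by linarith) ?_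
  have := Real.one_le_cosh (Real.sqrt (4 * ω₀ - ω₁ ^ 2) * x)
  nlinarith [abs_nonneg ω₁]

/-- The first-order equation `(r'/r)² = q(r) / 4` of the profile. -/
lemma ksq_sq {b ω₀ ω₁ : ℝ} (hb : 0 < b) (hΩ : ω₁ ^ 2 < 4 * ω₀) (x : ℝ) :
    ksq b ω₀ ω₁ x ^ 2 = qpot b ω₀ ω₁ (rsq b ω₀ ω₁ x) / 4 := by
  have hd := den_pos hb hΩ x
  have hg : 0 < gam b := by unfold gam; positivity
  have hc : 0 < 4 * ω₀ - ω₁ ^ 2 := by linarith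
  have hD := Real.sq_sqrt (show 0 ≤ ω₁ ^ 2 + gam b * (4 * ω₀ - ω₁ ^ 2) by positivity)
  have hs := Real.sq_sqrt hc.le
  have hch := Real.cosh_sq (Real.sqrt (4 * ω₀ - ω₁ ^ 2) * x)
  unfold ksq rsq qpot
  set D := Real.sqrt (ω₁ ^ 2 + gam b * (4 * ω₀ - ω₁ ^ 2))
  set c := 4 * ω₀ - ω₁ ^ 2
  set C := Real.cosh (Real.sqrt c * x)
  set S := Real.sinh (Real.sqrt c * x)
  have : (-ω₁ + D * C) ≠ 0 := hd.ne'
  field_simp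
  rw [hs]
  linear_combination (-4 * c * D ^ 2) * hch - 4 * c * hD

lemma hasDerivAt_rsq {b ω₀ ω₁ : ℝ} (hb : 0 < b) (hΩ : ω₁ ^ 2 < 4 * ω₀) (x : ℝ) :
    HasDerivAt (rsq b ω₀ ω₁) (rsq b ω₀ ω₁ x * ksq b ω₀ ω₁ x) x := by
  have hd := (den_pos hb hΩ x).ne'
  have h1 : HasDerivAt (fun y : ℝ => Real.sqrt (4 * ω₀ - ω₁ ^ 2) * y)
      (Real.sqrt (4 * ω₀ - ω₁ ^ 2)) x := by
    simpa using (hasDerivAt_id x).const_mul (Real.sqrt (4 * ω₀ - ω₁ ^ 2))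
  have h2 := ((h1.cosh.const_mul
    (Real.sqrt (ω₁ ^ 2 + gam b * (4 * ω₀ - ω₁ ^ 2)))).const_add (-ω₁))
  have h3 := (hasDerivAt_const x (2 * (4 * ω₀ - ω₁ ^ 2))).div h2 hd
  refine h3.congr_deriv ?_
  unfold rsq ksq
  field_simp
  ring

lemma continuous_rsq {b ω₀ ω₁ : ℝ} (hb : 0 < b) (hΩ : ω₁ ^ 2 < 4 * ω₀) :
    Continuous (rsq b ω₀ ω₁) :=
  continuous_iff_continuousAt.2 fun x => (hasDerivAt_rsq hb hΩ x).continuousAt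

lemma continuous_ksq {b ω₀ ω₁ : ℝ} (hb : 0 < b) (hΩ : ω₁ ^ 2 < 4 * ω₀) :
    Continuous (ksq b ω₀ ω₁) := by
  unfold ksq
  exact Continuous.div (by fun_prop) (by fun_prop) fun x => (den_pos hb hΩ x).ne'

lemma integrable_rsq {b ω₀ ω₁ : ℝ} (hb : 0 < b) (hΩ : ω₁ ^ 2 < 4 * ω₀) :
    Integrable (rsq b ω₀ ω₁) := by
  have hc : 0 < 4 * ω₀ - ω₁ ^ 2 := by linarith
  have hD := sub_pos.2 (abs_lt_D hb hΩ)
  have hi := (integrable_inv_one_add_sq.comp_mul_left' (Real.sqrt_pos.2 hc).ne').const_mul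
    (2 * (4 * ω₀ - ω₁ ^ 2) * 2 / (Real.sqrt (ω₁ ^ 2 + gam b * (4 * ω₀ - ω₁ ^ 2)) - |ω₁|))
  refine hi.mono' (continuous_rsq hb hΩ).aestronglyMeasurable (.of_forall fun x => ?_)
  rw [Real.norm_of_nonneg (rsq_pos hb hΩ x).le]
  have h1 := den_lower b ω₀ ω₁ x
  have h2 := one_add_sq_le_two_cosh (Real.sqrt (4 * ω₀ - ω₁ ^ 2) * x)
  have h3 := mul_le_mul_of_nonneg_left h2 hD.le
  unfold rsq
  have h0 := den_pos hb hΩ x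
  rw [← div_eq_mul_inv, div_div, div_le_div_iff₀ h0 (by positivity)]
  nlinarith

/-- Multiplying `rsq` by a continuous function of itself preserves integrability. -/
lemma integrable_comp_rsq {b ω₀ ω₁ : ℝ} (hb : 0 < b) (hΩ : ω₁ ^ 2 < 4 * ω₀)
    {g : ℝ → ℝ} (hg : Continuous g) :
    Integrable fun x => g (rsq b ω₀ ω₁ x) * rsq b ω₀ ω₁ x := by
  obtain ⟨C, hC⟩ := (isCompact_Icc (a := (0 : ℝ)) (b := Rmax b ω₀ ω₁)).exists_bound_of_continuousOn
    hg.continuousOn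
  exact (integrable_rsq hb hΩ).bdd_mul (c := C)
    (hg.comp (continuous_rsq hb hΩ)).aestronglyMeasurable
    (.of_forall fun x => hC _ ⟨(rsq_pos hb hΩ x).le, rsq_le hb hΩ x⟩)

lemma hasDerivAt_theta {b ω₀ ω₁ : ℝ} (hb : 0 < b) (hΩ : ω₁ ^ 2 < 4 * ω₀) (x : ℝ) :
    HasDerivAt (theta b ω₀ ω₁) (ω₁ / 2 - rsq b ω₀ ω₁ x / 4) x := by
  have hi := integrable_rsq hb hΩ
  have hc := continuous_rsq hb hΩ
  have e : (fun y => ∫ η in Set.Iic y, rsq b ω₀ ω₁ η) = fun y =>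
      (∫ η in Set.Iic 0, rsq b ω₀ ω₁ η) + ∫ η in (0 : ℝ)..y, rsq b ω₀ ω₁ η := by
    funext y
    rw [← intervalIntegral.integral_Iic_sub_Iic hi.integrableOn hi.integrableOn]
    ring
  have h1 : HasDerivAt (fun y => ∫ η in Set.Iic y, rsq b ω₀ ω₁ η) (rsq b ω₀ ω₁ x) x := by
    rw [e]
    exact (hc.integral_hasStrictDerivAt 0 x).hasDerivAt.const_add _
  have h2 := ((hasDerivAt_id x).const_mul (ω₁ / 2)).sub (h1.const_mul (1 / 4))
  exact h2.congr_deriv (by ring)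

lemma phi_eq {b ω₀ ω₁ : ℝ} (hb : 0 < b) (hΩ : ω₁ ^ 2 < 4 * ω₀) (x : ℝ) : phi b ω₀ ω₁ x =
    (Real.sqrt (rsq b ω₀ ω₁ x) : ℂ) * Complex.exp ((theta b ω₀ ω₁ x : ℂ) * Complex.I) := by
  have h : ∀ y, phit b ω₀ ω₁ y ^ 2 = rsq b ω₀ ω₁ y := fun y => Real.sq_sqrt (rsq_pos hb hΩ y).le
  unfold phi theta
  simp only [h]
  change (Real.sqrt (rsq b ω₀ ω₁ x) : ℂ) * _ = _
  congr 2
  push_cast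
  ring

lemma hasDerivAt_phi {b ω₀ ω₁ : ℝ} (hb : 0 < b) (hΩ : ω₁ ^ 2 < 4 * ω₀) (x : ℝ) :
    HasDerivAt (phi b ω₀ ω₁)
    ((Real.sqrt (rsq b ω₀ ω₁ x) : ℂ) * ((ksq b ω₀ ω₁ x / 2 : ℝ)
      + Complex.I * (ω₁ / 2 - rsq b ω₀ ω₁ x / 4 : ℝ)) *
      Complex.exp ((theta b ω₀ ω₁ x : ℂ) * Complex.I)) x := by
  have e : phi b ω₀ ω₁ = fun x => (Real.sqrt (rsq b ω₀ ω₁ x) : ℂ) *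
      Complex.exp ((theta b ω₀ ω₁ x : ℂ) * Complex.I) := funext (phi_eq hb hΩ)
  have hr := rsq_pos hb hΩ x
  have h1 := ((hasDerivAt_rsq hb hΩ x).sqrt hr.ne').ofReal_comp
  have h2 := ((hasDerivAt_theta hb hΩ x).ofReal_comp.mul_const Complex.I).cexp
  have h3 : rsq b ω₀ ω₁ x * ksq b ω₀ ω₁ x / (2 * Real.sqrt (rsq b ω₀ ω₁ x)) =
      Real.sqrt (rsq b ω₀ ω₁ x) * (ksq b ω₀ ω₁ x / 2) := by
    have := (Real.sqrt_pos.2 hr).ne'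
    field_simp
    rw [Real.sq_sqrt hr.le]
    ring
  rw [h3] at h1
  rw [e]
  refine (h1.mul h2).congr_deriv ?_
  push_cast
  ring

lemma norm_phi_sq {b ω₀ ω₁ : ℝ} (hb : 0 < b) (hΩ : ω₁ ^ 2 < 4 * ω₀) (x : ℝ) :
    ‖phi b ω₀ ω₁ x‖ ^ 2 = rsq b ω₀ ω₁ x := by
  rw [phi_eq hb hΩ, norm_mul, Complex.norm_exp_ofReal_mul_I, mul_one, Complex.norm_real,
    Real.norm_eq_abs, sq_abs, Real.sq_sqrt (rsq_pos hb hΩ x).le]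

lemma H1_phi {b ω₀ ω₁ : ℝ} (hb : 0 < b) (hΩ : ω₁ ^ 2 < 4 * ω₀) :
    H1 (phi b ω₀ ω₁) := by
  refine ⟨fun x => (hasDerivAt_phi hb hΩ x).differentiableAt, ?_, ?_⟩
  · simpa only [norm_phi_sq hb hΩ] using integrable_rsq hb hΩ
  · have hg : Continuous fun t => qpot b ω₀ ω₁ t / 16 + (ω₁ / 2 - t / 4) ^ 2 := by
      unfold qpot; fun_prop
    refine (integrable_comp_rsq hb hΩ hg).congr (.of_forall fun x => ?_)
    simp only
    rw [(hasDerivAt_phi hb hΩ x).deriv, norm_mul, Complex.norm_exp_ofReal_mul_I, mul_one, norm_mul,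
      mul_pow, Complex.norm_real, Real.norm_eq_abs, sq_abs, Real.sq_sqrt (rsq_pos hb hΩ x).le,
      ← Complex.normSq_eq_norm_sq, Complex.normSq_apply]
    have := ksq_sq hb hΩ x
    simp only [Complex.add_re, Complex.add_im, Complex.mul_re, Complex.mul_im, Complex.I_re,
      Complex.I_im, Complex.ofReal_re, Complex.ofReal_im]
    linear_combination (-rsq b ω₀ ω₁ x / 4) * this

/-- Equipartition: the kinetic and potential terms of the density agree along `φ_ω`. -/
lemma sdens_phi {b ω₀ ω₁ : ℝ} (hb : 0 < b) (hΩ : ω₁ ^ 2 < 4 * ω₀) (x : ℝ) :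
    sdens b ω₀ ω₁ (phi b ω₀ ω₁ x) (deriv (phi b ω₀ ω₁) x) =
    rsq b ω₀ ω₁ x * qpot b ω₀ ω₁ (rsq b ω₀ ω₁ x) / 16 := by
  unfold sdens
  rw [norm_phi_sq hb hΩ, (hasDerivAt_phi hb hΩ x).deriv, phi_eq hb hΩ]
  have e : (Real.sqrt (rsq b ω₀ ω₁ x) : ℂ) * ((ksq b ω₀ ω₁ x / 2 : ℝ)
      + Complex.I * (ω₁ / 2 - rsq b ω₀ ω₁ x / 4 : ℝ)) *
      Complex.exp ((theta b ω₀ ω₁ x : ℂ) * Complex.I)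
      - Complex.I * ((ω₁ / 2 - rsq b ω₀ ω₁ x / 4 : ℝ) : ℂ) *
      ((Real.sqrt (rsq b ω₀ ω₁ x) : ℂ) * Complex.exp ((theta b ω₀ ω₁ x : ℂ) * Complex.I)) =
      ((Real.sqrt (rsq b ω₀ ω₁ x) * (ksq b ω₀ ω₁ x / 2) : ℝ) : ℂ) *
        Complex.exp ((theta b ω₀ ω₁ x : ℂ) * Complex.I) := by
    push_cast; ring
  rw [e, norm_mul, Complex.norm_exp_ofReal_mul_I, mul_one, Complex.norm_real, Real.norm_eq_abs,
    sq_abs, mul_pow, Real.sq_sqrt (rsq_pos hb hΩ x).le]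
  linear_combination (rsq b ω₀ ω₁ x / 8) * ksq_sq hb hΩ x

lemma Sfun_phi {b ω₀ ω₁ : ℝ} (hb : 0 < b) (hΩ : ω₁ ^ 2 < 4 * ω₀) :
    Sfun b ω₀ ω₁ (phi b ω₀ ω₁) = Hpot b ω₀ ω₁ (Rmax b ω₀ ω₁) / 4 := by
  obtain ⟨hint, hS⟩ := (H1_phi hb hΩ).hasIntegral_sdens b ω₀ ω₁
  have hD0 : 0 ≤ Real.sqrt (ω₁ ^ 2 + gam b * (4 * ω₀ - ω₁ ^ 2)) := Real.sqrt_nonneg _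
  have hs0 : 0 ≤ Real.sqrt (4 * ω₀ - ω₁ ^ 2) := Real.sqrt_nonneg _
  have habs : ∀ x, |ksq b ω₀ ω₁ x| = Real.sqrt (qpot b ω₀ ω₁ (rsq b ω₀ ω₁ x)) / 2 := by
    intro x
    rw [← Real.sqrt_sq_eq_abs, ksq_sq hb hΩ, Real.sqrt_div' _ (by norm_num),
      show (4 : ℝ) = 2 ^ 2 by norm_num, Real.sqrt_sq (by norm_num)]
  have hi' : Integrable fun x => rsq b ω₀ ω₁ x * ksq b ω₀ ω₁ x := by
    refine (integrable_comp_rsq hb hΩ (continuous_sqrt_qpot b ω₀ ω₁)).mono'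
      ((continuous_rsq hb hΩ).mul (continuous_ksq hb hΩ)).aestronglyMeasurable
      (.of_forall fun x => ?_)
    have h0 := (rsq_pos hb hΩ x).le
    rw [norm_mul, Real.norm_of_nonneg h0, Real.norm_eq_abs, habs]
    nlinarith [Real.sqrt_nonneg (qpot b ω₀ ω₁ (rsq b ω₀ ω₁ x)),
      mul_nonneg h0 (Real.sqrt_nonneg (qpot b ω₀ ω₁ (rsq b ω₀ ω₁ x)))]
  obtain ⟨hi, hp, hm⟩ := half_line_integrals (b := b) (ω₀ := ω₀) (ω₁ := ω₁)
    (hasDerivAt_rsq hb hΩ) (integrable_rsq hb hΩ) hi' (fun x => (rsq_pos hb hΩ x).le)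
    (rsq_le hb hΩ) 0
  have hR : rsq b ω₀ ω₁ 0 = Rmax b ω₀ ω₁ := by simp [rsq, Rmax]
  have hq : ∀ x, Real.sqrt (qpot b ω₀ ω₁ (rsq b ω₀ ω₁ x)) ^ 2 = qpot b ω₀ ω₁ (rsq b ω₀ ω₁ x) :=
    fun x => Real.sq_sqrt (qpot_nonneg hb hΩ (rsq_pos hb hΩ x).le (rsq_le hb hΩ x))
  rw [hR] at hp hm
  rw [hS, ← intervalIntegral.integral_Iic_add_Ioi (b := 0) hint.integrableOn hint.integrableOn]
  have h1 : ∫ x in Set.Iic 0, sdens b ω₀ ω₁ (phi b ω₀ ω₁ x) (deriv (phi b ω₀ ω₁) x) =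
      ∫ x in Set.Iic 0, (1 / 8) * (Real.sqrt (qpot b ω₀ ω₁ (rsq b ω₀ ω₁ x))
        * (rsq b ω₀ ω₁ x * ksq b ω₀ ω₁ x)) := by
    refine setIntegral_congr_fun measurableSet_Iic fun x hx => ?_
    have hk : 0 ≤ ksq b ω₀ ω₁ x := by
      refine div_nonneg (neg_nonneg.2 (mul_nonpos_of_nonneg_of_nonpos (by positivity) ?_))
        (den_pos hb hΩ x).le
      exact Real.sinh_nonpos_iff.2 (mul_nonpos_of_nonneg_of_nonpos hs0 hx)
    have := habs x
    rw [abs_of_nonneg hk] at this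
    rw [sdens_phi hb hΩ, this, ← hq x, Real.sqrt_sq (Real.sqrt_nonneg _)]
    ring
  have h2 : ∫ x in Set.Ioi 0, sdens b ω₀ ω₁ (phi b ω₀ ω₁ x) (deriv (phi b ω₀ ω₁) x) =
      ∫ x in Set.Ioi 0, (-1 / 8) * (Real.sqrt (qpot b ω₀ ω₁ (rsq b ω₀ ω₁ x))
        * (rsq b ω₀ ω₁ x * ksq b ω₀ ω₁ x)) := by
    refine setIntegral_congr_fun measurableSet_Ioi fun x hx => ?_
    have hk : ksq b ω₀ ω₁ x ≤ 0 := by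
      refine div_nonpos_of_nonpos_of_nonneg (neg_nonpos.2 (mul_nonneg (by positivity) ?_))
        (den_pos hb hΩ x).le
      exact Real.sinh_nonneg_iff.2 (mul_nonneg hs0 (le_of_lt hx))
    have := habs x
    rw [abs_of_nonpos hk] at this
    have hk' : ksq b ω₀ ω₁ x = -(Real.sqrt (qpot b ω₀ ω₁ (rsq b ω₀ ω₁ x)) / 2) := by linarith
    rw [sdens_phi hb hΩ, hk', ← hq x, Real.sqrt_sq (Real.sqrt_nonneg _)]
    ring
  rw [h1, h2, integral_const_mul, integral_const_mul, hm, hp]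
  ring

theorem stmt14 (b : ℝ) (hb : 0 < b) (ω₀ ω₁ : ℝ) (hΩ : ω₁ ^ 2 < 4 * ω₀)
    (v : ℝ → ℂ) (hv : H1 v) (hv0 : v ≠ 0) (hK : Kfun b ω₀ ω₁ v = 0) :
    Sfun b ω₀ ω₁ (phi b ω₀ ω₁) ≤ Sfun b ω₀ ω₁ v := by
  obtain ⟨x₁, hx₁⟩ := Function.ne_iff.1 hv0
  have hpos : 0 < ‖v x₁‖ ^ 2 := pow_pos (norm_pos_iff.2 hx₁) 2
  obtain ⟨x₀, hmax⟩ := exists_max hv.hasDerivAt_sq hv.2.1 hv.integrable_deriv_sq hpos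
  have hM : 0 < ‖v x₀‖ ^ 2 := hpos.trans_le (hmax x₁)
  have hR := Rmax_pos hb hΩ
  -- scale `v` so that the peak of `|l v|²` is exactly the amplitude `Rmax` of the solitary wave
  set l := Real.sqrt (Rmax b ω₀ ω₁ / ‖v x₀‖ ^ 2)
  have hl : l ^ 2 = Rmax b ω₀ ω₁ / ‖v x₀‖ ^ 2 := Real.sq_sqrt (by positivity)
  have hn : ∀ x, ‖(l : ℂ) * v x‖ ^ 2 = Rmax b ω₀ ω₁ / ‖v x₀‖ ^ 2 * ‖v x‖ ^ 2 := fun x => by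
    rw [norm_mul, mul_pow, Complex.norm_real, Real.norm_eq_abs, sq_abs, hl]
  rw [Sfun_phi hb hΩ]
  refine le_trans (lower_bound hb hΩ (hv.smul l) (x₀ := x₀) ?_ fun x => ?_)
    (Sfun_smul_le hv hb hΩ hK l)
  · rw [hn, div_mul_cancel₀ _ hM.ne']
  · rw [hn, div_mul_eq_mul_div, div_le_iff₀ hM]
    exact mul_le_mul_of_nonneg_left (hmax x) hR.le

end
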